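/- arXiv:2508.11972 — 8 statements merged into one kernel-verified Lean document; each statement's English description precedes it below -/
import Mathlib

section
/- Let (X, ≤, τ) be an Esakia space, let c ⊆ X be a closed upset, and let x ∈ X with x ∉ c. Then there exists a clopen upset a of (X, ≤, τ) such that c ⊆ a and x ∉ a. -/
/-- Let `(X, ≤, τ)` be an Esakia space: `X` a nonempty
partially ordered set with a compact topology such that (i) whenever `x ≰ y`
there is a clopen upset containing `x` but not `y`, and (ii) the downset of
every clopen set is clopen.  If `c` is a closed upset and `x ∉ c`, then there
is a clopen upset `a` with `c ⊆ a` and `x ∉ a`. -/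
theorem esakia_clopen_upset_separation
    (X : Type) [Nonempty X] [PartialOrder X] [TopologicalSpace X] [CompactSpace X]
    (sep : ∀ x y : X, ¬ x ≤ y →
      ∃ a : Set X, IsClopen a ∧ IsUpperSet a ∧ x ∈ a ∧ y ∉ a)
    (down_clopen : ∀ a : Set X, IsClopen a → IsClopen {x : X | ∃ y ∈ a, x ≤ y})
    (c : Set X) (hc_closed : IsClosed c) (hc_up : IsUpperSet c)
    (x : X) (hx : x ∉ c) :
    ∃ a : Set X, IsClopen a ∧ IsUpperSet a ∧ c ⊆ a ∧ x ∉ a := by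
  refine hc_closed.isCompact.induction_on
    (p := fun s => ∃ a : Set X, IsClopen a ∧ IsUpperSet a ∧ s ⊆ a ∧ x ∉ a) ?_ ?_ ?_ ?_
  · exact ⟨∅, isClopen_empty, isUpperSet_empty, subset_rfl, fun h => h⟩
  · rintro s t hst ⟨a, h1, h2, h3, h4⟩
    exact ⟨a, h1, h2, hst.trans h3, h4⟩
  · rintro s t ⟨a, h1, h2, h3, h4⟩ ⟨b, k1, k2, k3, k4⟩
    exact ⟨a ∪ b, h1.union k1, h2.union k2, Set.union_subset_union h3 k3,
      fun h => h.elim h4 k4⟩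
  · intro y hy
    obtain ⟨a, h1, h2, h3, h4⟩ := sep y x (fun h => hx (hc_up h hy))
    exact ⟨a, mem_nhdsWithin_of_mem_nhds (h1.isOpen.mem_nhds h3), a, h1, h2, subset_rfl, h4⟩
end

section
/- A conditional Kripke frame F = (X, ≤, 𝓡) validates the axiom (ex) ((p ∧ q) ⊳ r) → (p ⊳ (q ⊳ r)) if and only if for all upsets a, b of (X, ≤) one has (R_a ∘ R_b) ⊆ (R_{a∩b} ∘ ≤), i.e. whenever x R_a y and y R_b z there exists w with x R_{a∩b} w and w ≤ z. -/
/-! ## The conditional language `L_⊳` -/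

/-- Formulas of the conditional language `L_⊳`, with proposition letters
indexed by the countable set `ℕ`. -/
inductive CForm : Type where
  | var : ℕ → CForm
  | bot : CForm
  | and : CForm → CForm → CForm
  | or : CForm → CForm → CForm
  | imp : CForm → CForm → CForm
  | cond : CForm → CForm → CForm

/-- `⊤ := ⊥ → ⊥`. -/
def cTop : CForm := CForm.imp CForm.bot CForm.bot

/-- `φ ↔ ψ := (φ → ψ) ∧ (ψ → φ)`. -/
def cIff (φ ψ : CForm) : CForm := CForm.and (CForm.imp φ ψ) (CForm.imp ψ φ)

/-- Uniform substitution of formulas for proposition letters. -/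
def psubst (σ : ℕ → CForm) : CForm → CForm
  | CForm.var q => σ q
  | CForm.bot => CForm.bot
  | CForm.and φ ψ => CForm.and (psubst σ φ) (psubst σ ψ)
  | CForm.or φ ψ => CForm.or (psubst σ φ) (psubst σ ψ)
  | CForm.imp φ ψ => CForm.imp (psubst σ φ) (psubst σ ψ)
  | CForm.cond φ ψ => CForm.cond (psubst σ φ) (psubst σ ψ)

/-- The logic `ICK ⊕ Γ`: the smallest set of `L_⊳`-formulas containing an
axiomatisation of intuitionistic propositional logic, the formulas of `Γ`, the
axioms `(k_c)` and `(n_c)`, closed under uniform substitution, modus ponens and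
the two congruence rules. -/
inductive ICK (Γ : Set CForm) : CForm → Prop where
  | prem {φ : CForm} : φ ∈ Γ → ICK Γ φ
  | a1 : ICK Γ (CForm.imp (CForm.and (CForm.var 0) (CForm.var 1)) (CForm.var 0))
  | a2 : ICK Γ (CForm.imp (CForm.and (CForm.var 0) (CForm.var 1)) (CForm.var 1))
  | a3 : ICK Γ (CForm.imp (CForm.imp (CForm.var 0) (CForm.var 1))
      (CForm.imp (CForm.imp (CForm.var 0) (CForm.var 2))
        (CForm.imp (CForm.var 0) (CForm.and (CForm.var 1) (CForm.var 2)))))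
  | a4 : ICK Γ (CForm.imp (CForm.var 0) (CForm.or (CForm.var 0) (CForm.var 1)))
  | a5 : ICK Γ (CForm.imp (CForm.var 1) (CForm.or (CForm.var 0) (CForm.var 1)))
  | a6 : ICK Γ (CForm.imp (CForm.imp (CForm.var 0) (CForm.var 2))
      (CForm.imp (CForm.imp (CForm.var 1) (CForm.var 2))
        (CForm.imp (CForm.or (CForm.var 0) (CForm.var 1)) (CForm.var 2))))
  | a7 : ICK Γ (CForm.imp CForm.bot (CForm.var 0))
  | a8 : ICK Γ (CForm.imp (CForm.var 0) (CForm.imp (CForm.var 1) (CForm.var 0)))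
  | a9 : ICK Γ (CForm.imp
      (CForm.imp (CForm.var 0) (CForm.imp (CForm.var 1) (CForm.var 2)))
      (CForm.imp (CForm.imp (CForm.var 0) (CForm.var 1))
        (CForm.imp (CForm.var 0) (CForm.var 2))))
  | kc : ICK Γ (cIff (CForm.cond (CForm.var 0) (CForm.and (CForm.var 1) (CForm.var 2)))
      (CForm.and (CForm.cond (CForm.var 0) (CForm.var 1))
        (CForm.cond (CForm.var 0) (CForm.var 2))))
  | nc : ICK Γ (cIff (CForm.cond (CForm.var 0) cTop) cTop)
  | subst {φ : CForm} (σ : ℕ → CForm) : ICK Γ φ → ICK Γ (psubst σ φ)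
  | mp {φ ψ : CForm} : ICK Γ (CForm.imp φ ψ) → ICK Γ φ → ICK Γ ψ
  | congL {φ ψ χ : CForm} :
      ICK Γ (cIff φ ψ) → ICK Γ (cIff (CForm.cond φ χ) (CForm.cond ψ χ))
  | congR {φ ψ χ : CForm} :
      ICK Γ (cIff φ ψ) → ICK Γ (cIff (CForm.cond χ φ) (CForm.cond χ ψ))

/-! ## Conditional Kripke frames and semantics -/

/-- `a` is an upset (upward closed set) w.r.t. the relation `le`. -/
def IsUpset {X : Type} (le : X → X → Prop) (a : Set X) : Prop :=
  ∀ ⦃x y : X⦄, le x y → x ∈ a → y ∈ a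

/-- The upward closure `↑s` of a set `s` w.r.t. the relation `le`. -/
def upCl {X : Type} (le : X → X → Prop) (s : Set X) : Set X :=
  {z | ∃ y ∈ s, le y z}

/-- Truth sets of `L_⊳`-formulas, by intuitionistic Kripke semantics for the
propositional connectives, where `x ⊨ φ ⊳ ψ` iff every `y` with
`x R_{V(φ)} y` satisfies `ψ` (here `V(φ)` is the truth set of `φ`). -/
def csat {X : Type} (le : X → X → Prop) (R : Set X → X → X → Prop)
    (V : ℕ → Set X) : CForm → Set X
  | CForm.var p => V p
  | CForm.bot => ∅
  | CForm.and φ ψ => csat le R V φ ∩ csat le R V ψ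
  | CForm.or φ ψ => csat le R V φ ∪ csat le R V ψ
  | CForm.imp φ ψ => {x | ∀ y, le x y → y ∈ csat le R V φ → y ∈ csat le R V ψ}
  | CForm.cond φ ψ => {x | ∀ y, R (csat le R V φ) x y → y ∈ csat le R V ψ}

/-- A conditional Kripke frame: a nonempty preordered set `(X, le)` with a
family of relations `R a` (indexed by the upsets `a`) satisfying the coherence
condition `(≤ ∘ R_a) ⊆ (R_a ∘ ≤)`. -/
structure CondFrame where
  X : Type
  ne : Nonempty X
  le : X → X → Prop
  le_refl : ∀ x, le x x
  le_trans : ∀ ⦃x y z⦄, le x y → le y z → le x z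
  R : Set X → X → X → Prop
  coh : ∀ a : Set X, IsUpset le a →
    ∀ ⦃x y z⦄, le x y → R a y z → ∃ w, R a x w ∧ le w z

/-- Validity on a conditional Kripke frame: truth at every world under every
valuation of the proposition letters by upsets. -/
def CondFrame.valid (F : CondFrame) (φ : CForm) : Prop :=
  ∀ V : ℕ → Set F.X, (∀ p, IsUpset F.le (V p)) → ∀ x, x ∈ csat F.le F.R V φ

/-! ## Conditional Heyting algebras -/

/-- A conditional Heyting algebra: a Heyting algebra with a binary operation
`cond` (written `⊳` in the paper) preserving finite meets in its second
argument. -/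
class CondHeyting (A : Type) extends HeytingAlgebra A where
  cond : A → A → A
  cond_inf : ∀ a b c : A, cond a (b ⊓ c) = cond a b ⊓ cond a c
  cond_top : ∀ a : A, cond a ⊤ = ⊤

/-- Evaluation of an `L_⊳`-formula in a conditional Heyting algebra under an
assignment `σ` of the proposition letters. -/
def evalCHA {A : Type} [CondHeyting A] (σ : ℕ → A) : CForm → A
  | CForm.var p => σ p
  | CForm.bot => ⊥
  | CForm.and φ ψ => evalCHA σ φ ⊓ evalCHA σ ψ
  | CForm.or φ ψ => evalCHA σ φ ⊔ evalCHA σ ψ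
  | CForm.imp φ ψ => evalCHA σ φ ⇨ evalCHA σ ψ
  | CForm.cond φ ψ => CondHeyting.cond (evalCHA σ φ) (evalCHA σ ψ)

/-- A formula is satisfied in a conditional Heyting algebra if it evaluates to
`⊤` under every assignment. -/
def chaSat (A : Type) [CondHeyting A] (φ : CForm) : Prop :=
  ∀ σ : ℕ → A, evalCHA σ φ = ⊤

/-- A prime filter: a proper, nonempty, upward closed subset, closed under
binary meets, such that `a ⊔ b ∈ x` implies `a ∈ x` or `b ∈ x`. -/
def IsPrimeFilter {A : Type} [Lattice A] (x : Set A) : Prop :=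
  x.Nonempty ∧ x ≠ Set.univ ∧
  (∀ ⦃a b : A⦄, a ∈ x → a ≤ b → b ∈ x) ∧
  (∀ ⦃a b : A⦄, a ∈ x → b ∈ x → a ⊓ b ∈ x) ∧
  (∀ ⦃a b : A⦄, a ⊔ b ∈ x → a ∈ x ∨ b ∈ x)

/-! ## General conditional frames -/

/-- A general conditional frame `(X, ≤, 𝓡, A)`. -/
structure GenFrame where
  X : Type
  le : X → X → Prop
  le_refl : ∀ x, le x x
  le_trans : ∀ ⦃x y z⦄, le x y → le y z → le x z
  le_antisymm : ∀ ⦃x y⦄, le x y → le y x → x = y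
  A : Set (Set X)
  upA : ∀ a ∈ A, IsUpset le a
  univ_mem : Set.univ ∈ A
  empty_mem : ∅ ∈ A
  inter_mem : ∀ a ∈ A, ∀ b ∈ A, a ∩ b ∈ A
  union_mem : ∀ a ∈ A, ∀ b ∈ A, a ∪ b ∈ A
  R : Set X → X → X → Prop
  himp_mem : ∀ a ∈ A, ∀ b ∈ A, {x | ∀ y, le x y → y ∈ a → y ∈ b} ∈ A
  cimp_mem : ∀ a ∈ A, ∀ b ∈ A, {x | ∀ y, R a x y → y ∈ b} ∈ A
  coh : ∀ a ∈ A, ∀ ⦃x y z⦄, le x y → R a y z → ∃ w, R a x w ∧ le w z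

/-- The carrier of the complex algebra of a general frame: the admissible
upsets. -/
def GenFrame.AUp (G : GenFrame) : Type := {a : Set G.X // a ∈ G.A}

instance GenFrame.instLatticeAUp (G : GenFrame) : Lattice G.AUp where
  le a b := a.val ⊆ b.val
  le_refl a := subset_rfl
  le_trans a b c h h' := Set.Subset.trans h h'
  le_antisymm a b h h' := Subtype.ext (subset_antisymm h h')
  sup a b := ⟨a.val ∪ b.val, G.union_mem _ a.2 _ b.2⟩
  le_sup_left a b := Set.subset_union_left
  le_sup_right a b := Set.subset_union_right
  sup_le a b c h h' := Set.union_subset h h'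
  inf a b := ⟨a.val ∩ b.val, G.inter_mem _ a.2 _ b.2⟩
  inf_le_left a b := Set.inter_subset_left
  inf_le_right a b := Set.inter_subset_right
  le_inf a b c h h' := Set.subset_inter h h'

instance GenFrame.instHeytingAUp (G : GenFrame) : HeytingAlgebra G.AUp :=
  { GenFrame.instLatticeAUp G with
    top := ⟨Set.univ, G.univ_mem⟩
    le_top := fun a => Set.subset_univ _
    bot := ⟨∅, G.empty_mem⟩
    bot_le := fun a => Set.empty_subset _
    himp := fun a b => ⟨{x | ∀ y, G.le x y → y ∈ a.val → y ∈ b.val},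
      G.himp_mem _ a.2 _ b.2⟩
    compl := fun a => ⟨{x | ∀ y, G.le x y → y ∈ a.val → y ∈ (∅ : Set G.X)},
      G.himp_mem _ a.2 _ G.empty_mem⟩
    le_himp_iff := by
      intro a b c
      show a.val ⊆ {x | ∀ y, G.le x y → y ∈ b.val → y ∈ c.val} ↔
        a.val ∩ b.val ⊆ c.val
      constructor
      · rintro h x ⟨hxa, hxb⟩
        exact h hxa x (G.le_refl x) hxb
      · intro h x hxa y hle hyb
        exact h ⟨G.upA a.val a.2 hle hxa, hyb⟩
    himp_bot := fun a => rfl }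

/-- The complex algebra `AUp(G)` of a general frame `G` is a conditional
Heyting algebra, with `a ⊳ b := {x | R_a[x] ⊆ b}`. -/
instance GenFrame.instCondHeytingAUp (G : GenFrame) : CondHeyting G.AUp where
  cond a b := ⟨{x | ∀ y, G.R a.val x y → y ∈ b.val}, G.cimp_mem _ a.2 _ b.2⟩
  cond_inf a b c := Subtype.ext (Set.ext fun x => by
    show (∀ y, G.R a.val x y → y ∈ b.val ∩ c.val) ↔
      (∀ y, G.R a.val x y → y ∈ b.val) ∧ (∀ y, G.R a.val x y → y ∈ c.val)
    constructor
    · intro h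
      exact ⟨fun y hy => (h y hy).1, fun y hy => (h y hy).2⟩
    · rintro ⟨h1, h2⟩ y hy
      exact ⟨h1 y hy, h2 y hy⟩)
  cond_top a := Subtype.ext (Set.ext fun x => by
    show (∀ y, G.R a.val x y → y ∈ (Set.univ : Set G.X)) ↔
      x ∈ (Set.univ : Set G.X)
    exact ⟨fun _ => trivial, fun _ y _ => trivial⟩)

/-! ## Conditional Esakia spaces -/

/-- A conditional Esakia space: an Esakia space `(X, le, top)` together with a
family of relations `R a` indexed by the clopen upsets `a`, such that
`{x | R_a[x] ⊆ b}` is clopen for clopen upsets `a, b`, each `R_a[x]` is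
closed, and `(≤ ∘ R_a ∘ ≤) = R_a`. -/
structure CondEsakia where
  X : Type
  ne : Nonempty X
  le : X → X → Prop
  le_refl : ∀ x, le x x
  le_trans : ∀ ⦃x y z⦄, le x y → le y z → le x z
  le_antisymm : ∀ ⦃x y⦄, le x y → le y x → x = y
  top : TopologicalSpace X
  compact : @CompactSpace X top
  sep : ∀ x y : X, ¬ le x y →
    ∃ a : Set X, @IsClopen X top a ∧ IsUpset le a ∧ x ∈ a ∧ y ∉ a
  down_clopen : ∀ a : Set X, @IsClopen X top a →
    @IsClopen X top {x | ∃ y ∈ a, le x y}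
  R : Set X → X → X → Prop
  box_clopen : ∀ a b : Set X, @IsClopen X top a → IsUpset le a →
    @IsClopen X top b → IsUpset le b →
    @IsClopen X top {x | ∀ y, R a x y → y ∈ b}
  coh : ∀ a : Set X, @IsClopen X top a → IsUpset le a →
    ∀ x z : X, (∃ x' y', le x x' ∧ R a x' y' ∧ le y' z) ↔ R a x z
  im_closed : ∀ a : Set X, @IsClopen X top a → IsUpset le a →
    ∀ x : X, @IsClosed X top {y | R a x y}

/-- `a` is a clopen upset of the conditional Esakia space `S`. -/
def CondEsakia.ClopUp (S : CondEsakia) (a : Set S.X) : Prop :=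
  @IsClopen S.X S.top a ∧ IsUpset S.le a

/-- Validity on a conditional Esakia space: truth at every world under every
valuation of the proposition letters by clopen upsets. -/
def CondEsakia.valid (S : CondEsakia) (φ : CForm) : Prop :=
  ∀ V : ℕ → Set S.X, (∀ p, S.ClopUp (V p)) → ∀ x, x ∈ csat S.le S.R V φ

/-- The family of relations of the empty fill-in `κ_∅(S)`: it agrees with
`S.R` on clopen upsets and is empty on all other sets. -/
def CondEsakia.emptyFill (S : CondEsakia) : Set S.X → S.X → S.X → Prop :=
  fun a x y => S.ClopUp a ∧ S.R a x y

/-- Validity on the empty fill-in `κ_∅(S)`, a conditional Kripke frame: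
truth at every world under every valuation by (arbitrary) upsets. -/
def CondEsakia.emptyFillValid (S : CondEsakia) (φ : CForm) : Prop :=
  ∀ V : ℕ → Set S.X, (∀ p, IsUpset S.le (V p)) →
    ∀ x, x ∈ csat S.le S.emptyFill V φ

/-! ## The modal language `L_□` -/

/-- Formulas of the modal language `L_□`. -/
inductive MForm : Type where
  | var : ℕ → MForm
  | bot : MForm
  | and : MForm → MForm → MForm
  | or : MForm → MForm → MForm
  | imp : MForm → MForm → MForm
  | box : MForm → MForm

/-- The translation `(−)^p : L_□ → L_⊳`: it fixes proposition letters, `⊥`,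
`∧`, `∨`, `→`, and sends `□ψ` to `p ⊳ ψ^p`. -/
def MForm.transl (p : ℕ) : MForm → CForm
  | MForm.var q => CForm.var q
  | MForm.bot => CForm.bot
  | MForm.and φ ψ => CForm.and (φ.transl p) (ψ.transl p)
  | MForm.or φ ψ => CForm.or (φ.transl p) (ψ.transl p)
  | MForm.imp φ ψ => CForm.imp (φ.transl p) (ψ.transl p)
  | MForm.box φ => CForm.cond (CForm.var p) (φ.transl p)

/-- The proposition letter `p` occurs (as a subformula) in a modal formula. -/
def MForm.occurs (p : ℕ) : MForm → Prop
  | MForm.var q => p = q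
  | MForm.bot => False
  | MForm.and φ ψ => φ.occurs p ∨ ψ.occurs p
  | MForm.or φ ψ => φ.occurs p ∨ ψ.occurs p
  | MForm.imp φ ψ => φ.occurs p ∨ ψ.occurs p
  | MForm.box φ => φ.occurs p

/-- Truth sets of `L_□`-formulas in a modal model, by intuitionistic Kripke
semantics with `x ⊨ □φ` iff every `y` with `x R y` satisfies `φ`. -/
def msat {X : Type} (le : X → X → Prop) (R : X → X → Prop)
    (V : ℕ → Set X) : MForm → Set X
  | MForm.var p => V p
  | MForm.bot => ∅
  | MForm.and φ ψ => msat le R V φ ∩ msat le R V ψ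
  | MForm.or φ ψ => msat le R V φ ∪ msat le R V ψ
  | MForm.imp φ ψ => {x | ∀ y, le x y → y ∈ msat le R V φ → y ∈ msat le R V ψ}
  | MForm.box φ => {x | ∀ y, R x y → y ∈ msat le R V φ}

/-- A modal Esakia space: an Esakia space with a relation `R` such that each
`R[x]` is closed and `R = (≤ ∘ R ∘ ≤)`. -/
structure ModalEsakia where
  X : Type
  ne : Nonempty X
  le : X → X → Prop
  le_refl : ∀ x, le x x
  le_trans : ∀ ⦃x y z⦄, le x y → le y z → le x z
  le_antisymm : ∀ ⦃x y⦄, le x y → le y x → x = y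
  top : TopologicalSpace X
  compact : @CompactSpace X top
  sep : ∀ x y : X, ¬ le x y →
    ∃ a : Set X, @IsClopen X top a ∧ IsUpset le a ∧ x ∈ a ∧ y ∉ a
  down_clopen : ∀ a : Set X, @IsClopen X top a →
    @IsClopen X top {x | ∃ y ∈ a, le x y}
  R : X → X → Prop
  im_closed : ∀ x : X, @IsClosed X top {y | R x y}
  coh : ∀ x z : X, (∃ x' y', le x x' ∧ R x' y' ∧ le y' z) ↔ R x z

/-- Validity on a modal Esakia space: truth everywhere under every valuation
by clopen upsets. -/
def ModalEsakia.valid (M : ModalEsakia) (φ : MForm) : Prop :=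
  ∀ V : ℕ → Set M.X, (∀ p, @IsClopen M.X M.top (V p) ∧ IsUpset M.le (V p)) →
    ∀ x, x ∈ msat M.le M.R V φ

/-- Validity on the underlying modal frame `κ(M)` of a modal Esakia space:
truth everywhere under every valuation by arbitrary upsets. -/
def ModalEsakia.frameValid (M : ModalEsakia) (φ : MForm) : Prop :=
  ∀ V : ℕ → Set M.X, (∀ p, IsUpset M.le (V p)) → ∀ x, x ∈ msat M.le M.R V φ

/-- An `L_□`-formula is d-persistent if its validity on a modal Esakia space
implies its validity on the underlying modal frame. -/
def DPersistent (φ : MForm) : Prop :=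
  ∀ M : ModalEsakia, M.valid φ → M.frameValid φ

/-- A conditional Kripke frame validates the axiom
`(ex)  ((p ∧ q) ⊳ r) → (p ⊳ (q ⊳ r))` iff for all upsets `a, b`:
`(R_a ∘ R_b) ⊆ (R_{a∩b} ∘ ≤)`. -/
theorem ex_correspondence (F : CondFrame) :
    F.valid (CForm.imp
      (CForm.cond (CForm.and (CForm.var 0) (CForm.var 1)) (CForm.var 2))
      (CForm.cond (CForm.var 0) (CForm.cond (CForm.var 1) (CForm.var 2)))) ↔
    ∀ a b : Set F.X, IsUpset F.le a → IsUpset F.le b →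
      ∀ ⦃x y z : F.X⦄, F.R a x y → F.R b y z →
        ∃ w, F.R (a ∩ b) x w ∧ F.le w z := by
  constructor
  · intro h a b ha hb x y z hxy hyz
    let c : Set F.X := {z | ∃ w, F.R (a ∩ b) x w ∧ F.le w z}
    have hc : IsUpset F.le c := by
      rintro u v huv ⟨w, hw, hwu⟩
      exact ⟨w, hw, F.le_trans hwu huv⟩
    let V : ℕ → Set F.X := fun n =>
      match n with
      | 0 => a
      | 1 => b
      | _ => c
    have hV : ∀ p, IsUpset F.le (V p) := by
      intro p
      match p with
      | 0 => exact ha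
      | 1 => exact hb
      | _ + 2 => exact hc
    exact h V hV x x (F.le_refl x) (fun w hw => ⟨w, hw, F.le_refl w⟩) y hxy z hyz
  · intro h V hV x y _ hy u hu z hz
    obtain ⟨w, hw, hwz⟩ := h (V 0) (V 1) (hV 0) (hV 1) hu hz
    exact hV 2 hwz (hy w hw)
end

section
/- For every set Γ of L_⊳-formulas and every L_⊳-formula φ: if φ ∈ ICK⊕Γ, then every conditional Kripke frame that validates all formulas of Γ also validates φ. -/
theorem csat_up (F : CondFrame) (V : ℕ → Set F.X) (hV : ∀ p, IsUpset F.le (V p)) (φ : CForm) :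
    IsUpset F.le (csat F.le F.R V φ) := by
  induction φ with
  | var p => exact hV p
  | bot => intro x y _ h; exact h
  | and φ ψ h1 h2 => intro x y h hx; exact ⟨h1 h hx.1, h2 h hx.2⟩
  | or φ ψ h1 h2 => intro x y h hx; exact hx.imp (fun k => h1 h k) (fun k => h2 h k)
  | imp φ ψ h1 h2 => intro x y h hx z hz; exact hx z (F.le_trans h hz)
  | cond φ ψ h1 h2 =>
    intro x y h hx z hz
    obtain ⟨w, hw, hwz⟩ := F.coh _ h1 h hz
    exact h2 hwz (hx w hw)

theorem csat_psubst {X : Type} (le : X → X → Prop) (R : Set X → X → X → Prop)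
    (V : ℕ → Set X) (σ : ℕ → CForm) (φ : CForm) :
    csat le R V (psubst σ φ) = csat le R (fun p => csat le R V (σ p)) φ := by
  induction φ with
  | var p => rfl
  | bot => rfl
  | and φ ψ h1 h2 => simp only [psubst, csat, h1, h2]
  | or φ ψ h1 h2 => simp only [psubst, csat, h1, h2]
  | imp φ ψ h1 h2 => simp only [psubst, csat, h1, h2]
  | cond φ ψ h1 h2 => simp only [psubst, csat, h1, h2]

theorem csat_eq_of_iff (F : CondFrame) (V : ℕ → Set F.X) (φ ψ : CForm)
    (h : ∀ x, x ∈ csat F.le F.R V (cIff φ ψ)) : csat F.le F.R V φ = csat F.le F.R V ψ := by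
  ext x
  exact ⟨(h x).1 x (F.le_refl x), (h x).2 x (F.le_refl x)⟩

theorem csat_iff_of_eq (F : CondFrame) (V : ℕ → Set F.X) (φ ψ : CForm)
    (h : csat F.le F.R V φ = csat F.le F.R V ψ) (x : F.X) :
    x ∈ csat F.le F.R V (cIff φ ψ) :=
  ⟨fun _ _ hy => h ▸ hy, fun _ _ hy => h ▸ hy⟩

theorem ick_sound_aux (Γ : Set CForm) (φ : CForm) (h : ICK Γ φ) (F : CondFrame)
    (hF : ∀ ψ ∈ Γ, F.valid ψ) : F.valid φ := by
  induction h with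
  | prem h => exact hF _ h
  | a1 => intro V hV x y _ h; exact h.1
  | a2 => intro V hV x y _ h; exact h.2
  | a3 =>
    intro V hV x y _ h z hz h' w hw h0
    exact ⟨h w (F.le_trans hz hw) h0, h' w hw h0⟩
  | a4 => intro V hV x y _ h; exact Or.inl h
  | a5 => intro V hV x y _ h; exact Or.inr h
  | a6 =>
    intro V hV x y _ h z hz h' w hw h0
    exact h0.elim (h w (F.le_trans hz hw)) (h' w hw)
  | a7 => intro V hV x y _ h; exact h.elim
  | a8 => intro V hV x y _ h z hz _; exact hV 0 hz h
  | a9 =>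
    intro V hV x y _ h z hz h' w hw h0
    exact h w (F.le_trans hz hw) h0 w (F.le_refl w) (h' w hw h0)
  | kc =>
    intro V hV x
    refine ⟨fun y _ h => ⟨fun z hz => (h z hz).1, fun z hz => (h z hz).2⟩,
      fun y _ h z hz => ⟨h.1 z hz, h.2 z hz⟩⟩
  | nc =>
    intro V hV x
    exact ⟨fun y _ _ z _ h => h, fun y _ _ z _ w _ h => h⟩
  | subst σ _ ih =>
    intro V hV x
    rw [csat_psubst]
    exact ih _ (fun p => csat_up F V hV (σ p)) x
  | mp _ _ ih1 ih2 => intro V hV x; exact ih1 V hV x x (F.le_refl x) (ih2 V hV x)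
  | congL _ ih =>
    intro V hV x
    apply csat_iff_of_eq
    simp only [csat, csat_eq_of_iff F V _ _ (ih V hV)]
  | congR _ ih =>
    intro V hV x
    apply csat_iff_of_eq
    simp only [csat, csat_eq_of_iff F V _ _ (ih V hV)]

/-- Soundness: if `φ ∈ ICK ⊕ Γ`, then every conditional
Kripke frame validating all formulas of `Γ` validates `φ`. -/
theorem ick_soundness (Γ : Set CForm) (φ : CForm) (h : ICK Γ φ) :
    ∀ F : CondFrame, (∀ γ ∈ Γ, F.valid γ) → F.valid φ := by
  intro F hF
  exact ick_sound_aux Γ φ h F hF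
end

section
/- Let f be a conditional bounded morphism between general models M = (G, V) and M' = (G', V'). Then for every world x of M and every L_⊳-formula φ: M, x ⊨ φ if and only if M', f(x) ⊨ φ. -/
/-- Conditional bounded morphisms between general models
preserve and reflect truth:  `M, x ⊨ φ` iff `M', f(x) ⊨ φ`. -/
theorem bounded_morphism_truth (G G' : GenFrame) (f : G.X → G'.X)
    (hpre : ∀ a' ∈ G'.A, f ⁻¹' a' ∈ G.A)
    (hmono : ∀ ⦃x y : G.X⦄, G.le x y → G'.le (f x) (f y))
    (hback : ∀ (x : G.X) (z' : G'.X), G'.le (f x) z' →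
      ∃ z : G.X, G.le x z ∧ f z = z')
    (hforth : ∀ a' ∈ G'.A, ∀ ⦃x y : G.X⦄,
      G.R (f ⁻¹' a') x y → G'.R a' (f x) (f y))
    (hcback : ∀ a' ∈ G'.A, ∀ (x : G.X) (z' : G'.X), G'.R a' (f x) z' →
      ∃ z : G.X, G.R (f ⁻¹' a') x z ∧ G'.le (f z) z')
    (V : ℕ → Set G.X) (V' : ℕ → Set G'.X)
    (hV : ∀ p, V p ∈ G.A) (hV' : ∀ p, V' p ∈ G'.A)
    (hVV' : ∀ p, V p = f ⁻¹' (V' p))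
    (x : G.X) (φ : CForm) :
    x ∈ csat G.le G.R V φ ↔ f x ∈ csat G'.le G'.R V' φ := by
  have hA : ∀ φ : CForm, csat G'.le G'.R V' φ ∈ G'.A := by
    intro φ
    induction φ with
    | var p => exact hV' p
    | bot => exact G'.empty_mem
    | and φ ψ h1 h2 => exact G'.inter_mem _ h1 _ h2
    | or φ ψ h1 h2 => exact G'.union_mem _ h1 _ h2
    | imp φ ψ h1 h2 => exact G'.himp_mem _ h1 _ h2
    | cond φ ψ h1 h2 => exact G'.cimp_mem _ h1 _ h2
  induction φ generalizing x with
  | var p =>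
    show x ∈ V p ↔ f x ∈ V' p
    rw [hVV' p]
    exact Iff.rfl
  | bot => exact Iff.rfl
  | and φ ψ h1 h2 => exact and_congr (h1 x) (h2 x)
  | or φ ψ h1 h2 => exact or_congr (h1 x) (h2 x)
  | imp φ ψ h1 h2 =>
    constructor
    · intro h z' hz' hφ
      obtain ⟨z, hz, rfl⟩ := hback x z' hz'
      exact (h2 z).1 (h z hz ((h1 z).2 hφ))
    · intro h y hy hφ
      exact (h2 y).2 (h (f y) (hmono hy) ((h1 y).1 hφ))
  | cond φ ψ h1 h2 =>
    have e : csat G.le G.R V φ = f ⁻¹' (csat G'.le G'.R V' φ) := Set.ext h1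
    constructor
    · intro h z' hz'
      obtain ⟨z, hz, hle⟩ := hcback _ (hA φ) x z' hz'
      rw [← e] at hz
      exact G'.upA _ (hA ψ) hle ((h2 z).1 (h z hz))
    · intro h y hy
      rw [e] at hy
      exact (h2 y).2 (h (f y) (hforth _ (hA φ) hy))
end

section
/- Let A be a conditional Heyting algebra and a, c ∈ A. Then θ(a ⊳ c) = {x | x is a prime filter of A and R^pf_a[x] ⊆ θ(c)}; that is, a prime filter x contains a ⊳ c if and only if every prime filter y with x R^pf_a y contains c. -/
/-- In a conditional Heyting algebra `A`, for `a, c ∈ A` a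
prime filter `x` contains `a ⊳ c` iff every prime filter `y` with
`x R^pf_a y` (i.e. `{b | a ⊳ b ∈ x} ⊆ y`) contains `c`; that is,
`θ(a ⊳ c) = {x prime | R^pf_a[x] ⊆ θ(c)}`. -/
theorem theta_cond (A : Type) [CondHeyting A] (a c : A)
    (x : Set A) (hx : IsPrimeFilter x) :
    CondHeyting.cond a c ∈ x ↔
      ∀ y : Set A, IsPrimeFilter y →
        {b : A | CondHeyting.cond a b ∈ x} ⊆ y → c ∈ y := by
  obtain ⟨⟨e, he⟩, -, hup, hinf, -⟩ := hx
  constructor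
  · intro h y _ hsub
    exact hsub h
  · intro h
    by_contra hc
    have hmono : ∀ {b d : A}, b ≤ d → CondHeyting.cond a b ≤ CondHeyting.cond a d := by
      intro b d hbd
      have h1 := CondHeyting.cond_inf a b d
      rw [inf_eq_left.mpr hbd] at h1
      rw [h1]
      exact inf_le_right
    have hF : Order.IsPFilter {b : A | CondHeyting.cond a b ∈ x} := by
      refine Order.IsPFilter.of_def ⟨⊤, ?_⟩ ?_ ?_
      · show CondHeyting.cond a ⊤ ∈ x
        rw [CondHeyting.cond_top]
        exact hup he le_top
      · intro b hb d hd
        refine ⟨b ⊓ d, ?_, inf_le_left, inf_le_right⟩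
        show CondHeyting.cond a (b ⊓ d) ∈ x
        rw [CondHeyting.cond_inf]
        exact hinf hb hd
      · intro b d hbd hb
        exact hup hb (hmono hbd)
    have hdisj : Disjoint ((hF.toPFilter : Order.PFilter A) : Set A)
        ((Order.Ideal.principal c : Order.Ideal A) : Set A) := by
      rw [Set.disjoint_left]
      intro b hb hbc
      exact hc (hup hb (hmono hbc))
    obtain ⟨J, hJ, hIJ, hFJ⟩ := DistribLattice.prime_ideal_of_disjoint_filter_ideal hdisj
    have hcJ : c ∈ J := hIJ (le_refl c)
    rw [Set.disjoint_left] at hFJ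
    have hT : (⊤ : A) ∈ {b : A | CondHeyting.cond a b ∈ x} := by
      show CondHeyting.cond a ⊤ ∈ x
      rw [CondHeyting.cond_top]
      exact hup he le_top
    refine h {b : A | b ∉ J} ⟨⟨⊤, fun hb => hFJ hT hb⟩, ?_, ?_, ?_, ?_⟩
      (fun b hb hbJ => hFJ hb hbJ) hcJ
    · intro hu
      have : c ∈ {b : A | b ∉ J} := hu ▸ Set.mem_univ c
      exact this hcJ
    · intro b d hb hbd hd
      exact hb (J.lower hbd hd)
    · intro b d hb hd hbd
      exact (hJ.mem_or_mem hbd).elim hb hd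
    · intro b d hbd
      by_contra hn
      simp only [Set.mem_setOf_eq, not_or, not_not] at hn
      exact hbd (Order.Ideal.sup_mem hn.1 hn.2)
end

section
/- Let h : A → A' be a homomorphism of conditional Heyting algebras (a Heyting algebra homomorphism with h(a ⊳ b) = h(a) ⊳' h(b) for all a, b). Let a ∈ A, let x' be a prime filter of A', and let z be a prime filter of A such that {b ∈ A | a ⊳ b ∈ h⁻¹(x')} ⊆ z. Then there exists a prime filter z' of A' such that {b' ∈ A' | h(a) ⊳' b' ∈ x'} ⊆ z' and h⁻¹(z') ⊆ z. -/
/-- Let `h : A → A'` be a homomorphism of conditional Heyting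
algebras, `a ∈ A`, `x'` a prime filter of `A'` and `z` a prime filter of `A`
with `{b | a ⊳ b ∈ h⁻¹(x')} ⊆ z`.  Then there is a prime filter `z'` of `A'`
such that `{b' | h(a) ⊳' b' ∈ x'} ⊆ z'` and `h⁻¹(z') ⊆ z`. -/
theorem cond_bounded_morphism_lifting {A A' : Type}
    [CondHeyting A] [CondHeyting A'] (h : HeytingHom A A')
    (hcond : ∀ a b : A,
      h (CondHeyting.cond a b) = CondHeyting.cond (h a) (h b))
    (a : A) (x' : Set A') (hx' : IsPrimeFilter x')
    (z : Set A) (hz : IsPrimeFilter z)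
    (hsub : {b : A | CondHeyting.cond a b ∈ (⇑h) ⁻¹' x'} ⊆ z) :
    ∃ z' : Set A', IsPrimeFilter z' ∧
      {b' : A' | CondHeyting.cond (h a) b' ∈ x'} ⊆ z' ∧ (⇑h) ⁻¹' z' ⊆ z := by
  obtain ⟨xne, -, xup, xinf, -⟩ := hx'
  obtain ⟨zne, zpr, zup, zinf, zpri⟩ := hz
  have cmono : ∀ (c b d : A'), b ≤ d → CondHeyting.cond c b ≤ CondHeyting.cond c d := by
    intro c b d hbd
    have h1 := CondHeyting.cond_inf c b d
    rw [inf_eq_left.mpr hbd] at h1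
    exact inf_eq_left.mp h1.symm
  have zbot : (⊥ : A) ∉ z := fun hb =>
    zpr (Set.eq_univ_of_forall fun b => zup hb bot_le)
  have hF : Order.IsPFilter {b' : A' | CondHeyting.cond (h a) b' ∈ x'} := by
    refine Order.IsPFilter.of_def ⟨⊤, ?_⟩ ?_ ?_
    · obtain ⟨w, hw⟩ := xne
      show CondHeyting.cond (h a) ⊤ ∈ x'
      rw [CondHeyting.cond_top]
      exact xup hw le_top
    · intro b hb d hd
      refine ⟨b ⊓ d, ?_, inf_le_left, inf_le_right⟩
      show CondHeyting.cond (h a) (b ⊓ d) ∈ x'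
      rw [CondHeyting.cond_inf]
      exact xinf hb hd
    · intro b d hbd hb
      exact xup hb (cmono _ _ _ hbd)
  have hI : Order.IsIdeal {c : A' | ∃ b : A, b ∉ z ∧ c ≤ h b} := by
    refine ⟨?_, ⟨⊥, ⊥, zbot, bot_le⟩, ?_⟩
    · rintro c d hdc ⟨b, hb, hcb⟩
      exact ⟨b, hb, hdc.trans hcb⟩
    · rintro c ⟨b, hb, hcb⟩ d ⟨e, he, hde⟩
      refine ⟨c ⊔ d, ⟨b ⊔ e, fun hbe => (zpri hbe).elim hb he, ?_⟩, le_sup_left, le_sup_right⟩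
      rw [map_sup]
      exact sup_le_sup hcb hde
  have hdis : Disjoint ((hF.toPFilter : Order.PFilter A') : Set A')
      ((hI.toIdeal : Order.Ideal A') : Set A') := by
    rw [Set.disjoint_left]
    rintro c hc ⟨b, hb, hcb⟩
    apply hb
    apply hsub
    show h (CondHeyting.cond a b) ∈ x'
    rw [hcond]
    exact xup hc (cmono _ _ _ hcb)
  obtain ⟨J, hJ, hIJ, hFJ⟩ := DistribLattice.prime_ideal_of_disjoint_filter_ideal hdis
  rw [Set.disjoint_left] at hFJ
  refine ⟨(J : Set A')ᶜ, ⟨?_, ?_, ?_, ?_, ?_⟩, fun c hc => hFJ hc, ?_⟩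
  · obtain ⟨w, hw⟩ := hF.toPFilter.nonempty
    exact ⟨w, hFJ hw⟩
  · intro hu
    have : (⊥ : A') ∈ (J : Set A')ᶜ := hu ▸ Set.mem_univ _
    exact this J.bot_mem
  · intro b d hb hbd hd
    exact hb (J.lower hbd hd)
  · intro b d hb hd hbd
    exact (hJ.mem_or_mem hbd).elim hb hd
  · intro b d hbd
    by_contra hcon
    simp only [Set.mem_compl_iff, not_or, not_not] at hcon
    exact hbd (Order.Ideal.sup_mem hcon.1 hcon.2)
  · intro b hb
    by_contra hbz
    exact hb (hIJ ⟨b, hbz, le_rfl⟩)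
end

section
/- For every set Γ of L_⊳-formulas and every L_⊳-formula φ: φ ∈ ICK⊕Γ if and only if φ is valid on every conditional Esakia space that validates all formulas of Γ. -/
theorem CondEsakia.csat_clopUp (S : CondEsakia) (V : ℕ → Set S.X)
    (hV : ∀ p, S.ClopUp (V p)) (φ : CForm) : S.ClopUp (csat S.le S.R V φ) := by
  let _ := S.top
  induction φ with
  | var p => exact hV p
  | bot => exact ⟨isClopen_empty, fun x y _ h => h⟩
  | and φ ψ h1 h2 =>
    exact ⟨h1.1.inter h2.1, fun x y h hx => ⟨h1.2 h hx.1, h2.2 h hx.2⟩⟩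
  | or φ ψ h1 h2 =>
    exact ⟨h1.1.union h2.1, fun x y h hx => hx.imp (h1.2 h) (h2.2 h)⟩
  | imp φ ψ h1 h2 =>
    refine ⟨?_, fun x y h hx z hz => hx z (S.le_trans h hz)⟩
    have := (S.down_clopen _ (h1.1.diff h2.1)).compl
    convert this using 1
    ext x
    simp only [csat, Set.mem_ofPred_eq, Set.mem_compl_iff, Set.mem_sdiff]
    push Not
    constructor
    · intro h y hy hle
      exact hy.2 (h y hle hy.1)
    · intro h y hle hy
      by_contra hc
      exact h y ⟨hy, hc⟩ hle
  | cond φ ψ h1 h2 =>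
    refine ⟨S.box_clopen _ _ h1.1 h1.2 h2.1 h2.2, fun x y h hx z hz => hx z ?_⟩
    exact (S.coh _ h1.1 h1.2 x z).1 ⟨y, z, h, hz, S.le_refl z⟩

theorem CondEsakia.csat_cIff (S : CondEsakia) (V : ℕ → Set S.X) (φ ψ : CForm) :
    (∀ x, x ∈ csat S.le S.R V (cIff φ ψ)) ↔ csat S.le S.R V φ = csat S.le S.R V ψ := by
  constructor
  · intro h
    ext x
    exact ⟨(h x).1 x (S.le_refl x), (h x).2 x (S.le_refl x)⟩
  · intro h x
    refine ⟨fun y _ hy => ?_, fun y _ hy => ?_⟩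
    · rwa [← h]
    · rwa [h]

theorem CondEsakia.sound (S : CondEsakia) {Γ : Set CForm} (hΓ : ∀ γ ∈ Γ, S.valid γ)
    {φ : CForm} (h : ICK Γ φ) : S.valid φ := by
  induction h with
  | prem h => exact hΓ _ h
  | a1 => intro V hV x y _ hy; exact hy.1
  | a2 => intro V hV x y _ hy; exact hy.2
  | a3 =>
    intro V hV x y _ hy z hz h2 w hw h
    exact ⟨hy w (S.le_trans hz hw) h, h2 w hw h⟩
  | a4 => intro V hV x y _ hy; exact Or.inl hy
  | a5 => intro V hV x y _ hy; exact Or.inr hy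
  | a6 =>
    intro V hV x y _ hy z hz h2 w hw h
    rcases h with h | h
    · exact hy w (S.le_trans hz hw) h
    · exact h2 w hw h
  | a7 => intro V hV x y _ hy; exact hy.elim
  | a8 => intro V hV x y _ hy z hz _; exact (hV 0).2 hz hy
  | a9 =>
    intro V hV x y _ hy z hz h2 w hw h
    exact hy w (S.le_trans hz hw) h w (S.le_refl w) (h2 w hw h)
  | kc =>
    intro V hV
    rw [S.csat_cIff]
    ext x
    exact ⟨fun h => ⟨fun y hy => (h y hy).1, fun y hy => (h y hy).2⟩,
      fun h y hy => ⟨h.1 y hy, h.2 y hy⟩⟩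
  | nc =>
    intro V hV
    rw [S.csat_cIff]
    ext x
    exact ⟨fun _ y _ h => h, fun _ y _ z _ h => h⟩
  | subst σ _ ih =>
    intro V hV x
    rw [csat_psubst]
    exact ih _ (fun p => S.csat_clopUp V hV (σ p)) x
  | mp _ _ ih1 ih2 => intro V hV x; exact ih1 V hV x x (S.le_refl x) (ih2 V hV x)
  | congL _ ih =>
    intro V hV
    have := (S.csat_cIff V _ _).1 (ih V hV)
    rw [S.csat_cIff]
    simp only [csat, this]
  | congR _ ih =>
    intro V hV
    have := (S.csat_cIff V _ _).1 (ih V hV)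
    rw [S.csat_cIff]
    simp only [csat, this]

/-! ## Theories -/

/-- Theories over `ICK Γ`. -/
def IsTh (Γ : Set CForm) (T : Set CForm) : Prop :=
  (∀ φ, ICK Γ φ → φ ∈ T) ∧ ∀ φ ψ, CForm.imp φ ψ ∈ T → φ ∈ T → ψ ∈ T

/-- Substitution of three formulas for the first three letters. -/
def sub3 (a b c : CForm) : ℕ → CForm
  | 0 => a
  | 1 => b
  | _ => c

theorem isTh_ICK (Γ : Set CForm) : IsTh Γ {φ | ICK Γ φ} :=
  ⟨fun _ h => h, fun _ _ h1 h2 => ICK.mp h1 h2⟩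

section Theories
open CForm
variable {Γ : Set CForm}

theorem ax1 (a b : CForm) : ICK Γ (imp (and a b) a) := ICK.subst (sub3 a b a) ICK.a1
theorem ax2 (a b : CForm) : ICK Γ (imp (and a b) b) := ICK.subst (sub3 a b a) ICK.a2
theorem ax3 (a b c : CForm) : ICK Γ (imp (imp a b) (imp (imp a c) (imp a (and b c)))) :=
  ICK.subst (sub3 a b c) ICK.a3
theorem ax4 (a b : CForm) : ICK Γ (imp a (or a b)) := ICK.subst (sub3 a b a) ICK.a4
theorem ax5 (a b : CForm) : ICK Γ (imp b (or a b)) := ICK.subst (sub3 a b a) ICK.a5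
theorem ax6 (a b c : CForm) : ICK Γ (imp (imp a c) (imp (imp b c) (imp (or a b) c))) :=
  ICK.subst (sub3 a b c) ICK.a6
theorem ax7 (a : CForm) : ICK Γ (imp bot a) := ICK.subst (sub3 a a a) ICK.a7
theorem ax8 (a b : CForm) : ICK Γ (imp a (imp b a)) := ICK.subst (sub3 a b a) ICK.a8
theorem ax9 (a b c : CForm) : ICK Γ (imp (imp a (imp b c)) (imp (imp a b) (imp a c))) :=
  ICK.subst (sub3 a b c) ICK.a9
theorem axk (a b c : CForm) :
    ICK Γ (cIff (cond a (and b c)) (and (cond a b) (cond a c))) :=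
  ICK.subst (sub3 a b c) ICK.kc
theorem axn (a : CForm) : ICK Γ (cIff (cond a cTop) cTop) :=
  ICK.subst (sub3 a a a) ICK.nc
theorem axid (a : CForm) : ICK Γ (imp a a) :=
  ICK.mp (ICK.mp (ax9 a (imp a a) a) (ax8 _ _)) (ax8 _ _)

theorem IsTh.mp1 {T : Set CForm} (h : IsTh Γ T) {a b : CForm} (hi : ICK Γ (imp a b))
    (ha : a ∈ T) : b ∈ T := h.2 _ _ (h.1 _ hi) ha

theorem IsTh.and_iff {T : Set CForm} (h : IsTh Γ T) {a b : CForm} :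
    and a b ∈ T ↔ a ∈ T ∧ b ∈ T := by
  refine ⟨fun hh => ⟨h.mp1 (ax1 _ _) hh, h.mp1 (ax2 _ _) hh⟩, fun ⟨ha, hb⟩ => ?_⟩
  have h1 := h.mp1 (ax8 a cTop) ha
  have h2 := h.mp1 (ax8 b cTop) hb
  exact h.2 _ _ (h.2 _ _ (h.mp1 (ax3 _ _ _) h1) h2) (h.1 _ (axid _))

theorem ICK.iff_iff {a b : CForm} : ICK Γ (cIff a b) ↔ ICK Γ (imp a b) ∧ ICK Γ (imp b a) :=
  (isTh_ICK Γ).and_iff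

/-- Adding an assumption to a theory. -/
theorem IsTh.adjoin {T : Set CForm} (h : IsTh Γ T) (a : CForm) :
    IsTh Γ {b | imp a b ∈ T} :=
  ⟨fun _ hb => h.1 _ (ICK.mp (ax8 _ _) hb),
    fun _ _ h1 h2 => h.2 _ _ (h.mp1 (ax9 _ _ _) h1) h2⟩

theorem IsTh.or_elim {T : Set CForm} (h : IsTh Γ T) {a b c : CForm} (ha : imp a c ∈ T)
    (hb : imp b c ∈ T) (hab : or a b ∈ T) : c ∈ T :=
  h.2 _ _ (h.2 _ _ (h.mp1 (ax6 _ _ _) ha) hb) hab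

theorem ICK.and_intro {a b c : CForm} (h1 : ICK Γ (imp a b)) (h2 : ICK Γ (imp a c)) :
    ICK Γ (imp a (and b c)) := ICK.mp (ICK.mp (ax3 _ _ _) h1) h2

theorem ICK.cond_mono {a b c : CForm} (h : ICK Γ (imp b c)) :
    ICK Γ (imp (cond a b) (cond a c)) := by
  have h1 : ICK Γ (cIff b (and b c)) :=
    ICK.iff_iff.2 ⟨ICK.and_intro (axid _) h, ax1 _ _⟩
  have h2 := (ICK.iff_iff.1 (ICK.congR (χ := a) h1)).1
  have h3 := (ICK.iff_iff.1 (axk (Γ := Γ) a b c)).1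
  have hT := (isTh_ICK Γ).adjoin (cond a b)
  exact hT.mp1 (ax2 _ _) (hT.mp1 h3 h2)

theorem IsTh.condTh {T : Set CForm} (h : IsTh Γ T) (a : CForm) :
    IsTh Γ {b | cond a b ∈ T} := by
  refine ⟨fun b hb => ?_, fun b c h1 h2 => ?_⟩
  · have h1 : cond a cTop ∈ T := h.mp1 (ICK.iff_iff.1 (axn a)).2 (h.1 _ (axid _))
    exact h.mp1 (ICK.cond_mono (ICK.mp (ax8 _ _) hb)) h1
  · have h3 : cond a (and (imp b c) b) ∈ T :=
      h.mp1 (ICK.iff_iff.1 (axk _ _ _)).2 (h.and_iff.2 ⟨h1, h2⟩)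
    refine h.mp1 (ICK.cond_mono ?_) h3
    have hT := (isTh_ICK Γ).adjoin (and (imp b c) b)
    exact hT.2 _ _ (ax1 _ _) (ax2 _ _)

/-- Prime theories. -/
def IsPrimeTh (Γ : Set CForm) (T : Set CForm) : Prop :=
  IsTh Γ T ∧ bot ∉ T ∧ ∀ a b : CForm, CForm.or a b ∈ T → a ∈ T ∨ b ∈ T

theorem IsTh.exists_prime {T : Set CForm} (h : IsTh Γ T) {a : CForm} (ha : a ∉ T) :
    ∃ P, IsPrimeTh Γ P ∧ T ⊆ P ∧ a ∉ P := by
  obtain ⟨M, hTM, hM⟩ := zorn_subset_nonempty {U | IsTh Γ U ∧ a ∉ U} (by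
    intro c hc hchain hne
    refine ⟨⋃₀ c, ⟨⟨fun φ hφ => ?_, fun φ ψ h1 h2 => ?_⟩, ?_⟩, fun s hs =>
      Set.subset_sUnion_of_mem hs⟩
    · obtain ⟨U, hU⟩ := hne
      exact ⟨U, hU, (hc hU).1.1 _ hφ⟩
    · obtain ⟨U, hU, hU1⟩ := h1
      obtain ⟨W, hW, hW1⟩ := h2
      rcases hchain.total hU hW with hle | hle
      · exact ⟨W, hW, (hc hW).1.2 _ _ (hle hU1) hW1⟩
      · exact ⟨U, hU, (hc hU).1.2 _ _ hU1 (hle hW1)⟩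
    · rintro ⟨U, hU, hU1⟩
      exact (hc hU).2 hU1) T ⟨h, ha⟩
  have hMth := hM.prop.1
  have key : ∀ b, b ∉ M → imp b a ∈ M := by
    intro b hb
    by_contra hba
    have hle : M ⊆ {c | imp b c ∈ M} := fun c hc => hMth.mp1 (ax8 _ _) hc
    have := hM.le_of_ge ⟨hMth.adjoin b, hba⟩ hle
    exact hb (this (hMth.1 _ (axid b)))
  refine ⟨M, ⟨hMth, fun hb => hM.prop.2 (hMth.mp1 (ax7 _) hb), fun b c hbc => ?_⟩, hTM,
    hM.prop.2⟩
  by_contra hcon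
  push Not at hcon
  exact hM.prop.2 (hMth.or_elim (key _ hcon.1) (key _ hcon.2) hbc)

/-! ## The canonical space -/

/-- Points of the canonical space: prime theories, as characteristic functions. -/
def CanX (Γ : Set CForm) : Type := {f : CForm → Bool // IsPrimeTh Γ {a | f a = true}}

instance : TopologicalSpace (CanX Γ) := inferInstanceAs (TopologicalSpace (Subtype _))

/-- The theory of a point. -/
def CanX.th (x : CanX Γ) : Set CForm := {a | x.1 a = true}

/-- The set of points containing a formula. -/
def hat (Γ : Set CForm) (a : CForm) : Set (CanX Γ) := {x | a ∈ x.th}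

theorem CanX.prime (x : CanX Γ) : IsPrimeTh Γ x.th := x.2
theorem CanX.isTh (x : CanX Γ) : IsTh Γ x.th := x.2.1

theorem mem_hat {a : CForm} {x : CanX Γ} : x ∈ hat Γ a ↔ a ∈ x.th := Iff.rfl

theorem exists_canX {P : Set CForm} (hP : IsPrimeTh Γ P) : ∃ x : CanX Γ, x.th = P := by
  classical
  have : {a | decide (a ∈ P) = true} = P := by ext; simp
  exact ⟨⟨fun a => decide (a ∈ P), by rw [this]; exact hP⟩, this⟩

theorem IsTh.exists_point {T : Set CForm} (h : IsTh Γ T) {a : CForm} (ha : a ∉ T) :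
    ∃ x : CanX Γ, T ⊆ x.th ∧ a ∉ x.th := by
  obtain ⟨P, hP, h1, h2⟩ := h.exists_prime ha
  obtain ⟨x, rfl⟩ := exists_canX hP
  exact ⟨x, h1, h2⟩

theorem clopen_coord (a : CForm) : IsClopen {f : CForm → Bool | f a = true} :=
  (isClopen_discrete {true}).preimage (continuous_apply a)

theorem hat_clopen (a : CForm) : IsClopen (hat Γ a) :=
  (clopen_coord a).preimage continuous_subtype_val

instance : CompactSpace (CanX Γ) := by
  refine isCompact_iff_compactSpace.1 (IsClosed.isCompact (X := CForm → Bool)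
    (s := {f | IsPrimeTh Γ {a | f a = true}}) ?_)
  have himp : ∀ (p q : (CForm → Bool) → Prop), IsClopen {f | p f} → IsClosed {f | q f} →
      IsClosed {f | p f → q f} := fun p q hp hq => by
    have heq : {f | p f → q f} = {f | p f}ᶜ ∪ {f | q f} := by
      ext f
      exact imp_iff_not_or
    rw [heq]
    exact hp.compl.isClosed.union hq
  have hall : ∀ {ι : Type} (p : ι → (CForm → Bool) → Prop), (∀ i, IsClosed {f | p i f}) →
      IsClosed {f | ∀ i, p i f} := fun p hp => by
    simpa only [Set.ofPred_forall] using isClosed_iInter hp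
  refine IsClosed.inter (IsClosed.inter ?_ ?_) (IsClosed.inter ?_ ?_)
  · refine hall (fun a f => ICK Γ a → f a = true) fun a => ?_
    by_cases ha : ICK Γ a
    · simpa [ha] using (clopen_coord a).isClosed
    · simp [ha]
  · exact hall (fun a f => ∀ b, f (imp a b) = true → f a = true → f b = true) fun a =>
      hall (fun b f => f (imp a b) = true → f a = true → f b = true) fun b =>
      himp _ _ (clopen_coord _) (himp _ _ (clopen_coord _) (clopen_coord _).isClosed)
  · exact (clopen_coord _).compl.isClosed
  · exact hall (fun a f => ∀ b, f (CForm.or a b) = true → f a = true ∨ f b = true) fun a =>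
      hall (fun b f => f (CForm.or a b) = true → f a = true ∨ f b = true) fun b =>
      himp _ _ (clopen_coord _) ((clopen_coord _).union (clopen_coord _)).isClosed

/-- Inclusion order on points. -/
def cle (x y : CanX Γ) : Prop := x.th ⊆ y.th

theorem hat_up (a : CForm) : IsUpset cle (hat Γ a) := fun _ _ h hx => h hx

theorem hat_and (a b : CForm) : hat Γ (and a b) = hat Γ a ∩ hat Γ b := by
  ext x
  exact x.isTh.and_iff

theorem mem_or {x : CanX Γ} {a b : CForm} : or a b ∈ x.th ↔ a ∈ x.th ∨ b ∈ x.th :=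
  ⟨x.prime.2.2 a b, fun h => h.elim (x.isTh.mp1 (ax4 _ _)) (x.isTh.mp1 (ax5 _ _))⟩

theorem hat_or (a b : CForm) : hat Γ (or a b) = hat Γ a ∪ hat Γ b := by
  ext x
  exact mem_or

theorem hat_bot : hat Γ bot = ∅ := by
  ext x
  exact ⟨fun h => x.prime.2.1 h, fun h => h.elim⟩

theorem mem_top (x : CanX Γ) : cTop ∈ x.th := x.isTh.1 _ (axid _)

theorem hat_imp (a b : CForm) :
    hat Γ (imp a b) = {x | ∀ y, cle x y → y ∈ hat Γ a → y ∈ hat Γ b} := by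
  ext x
  refine ⟨fun h y hy ha => y.isTh.2 _ _ (hy h) ha, fun h => ?_⟩
  by_contra hc
  obtain ⟨y, h1, h2⟩ := (x.isTh.adjoin a).exists_point (a := b) hc
  exact h2 (h y (fun c hc => h1 (x.isTh.mp1 (ax8 _ _) hc)) (h1 (x.isTh.1 _ (axid a))))

theorem hat_subset {a b : CForm} (h : hat Γ a ⊆ hat Γ b) : ICK Γ (imp a b) := by
  by_contra hc
  obtain ⟨y, h1, h2⟩ := ((isTh_ICK Γ).adjoin a).exists_point (a := b) hc
  exact h2 (h (h1 (axid a)))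

/-- Canonical relations. -/
def canR (A : Set (CanX Γ)) (x y : CanX Γ) : Prop :=
  ∀ a b, A = hat Γ a → cond a b ∈ x.th → b ∈ y.th

theorem canR_hat (a : CForm) (x y : CanX Γ) :
    canR (hat Γ a) x y ↔ {b | cond a b ∈ x.th} ⊆ y.th := by
  refine ⟨fun h b hb => h a b rfl hb, fun h a' b he hb => h ?_⟩
  have h1 : ICK Γ (cIff a' a) :=
    ICK.iff_iff.2 ⟨hat_subset he.ge, hat_subset he.le⟩
  exact x.isTh.mp1 (ICK.iff_iff.1 (ICK.congL h1)).1 hb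

theorem hat_cond (a b : CForm) :
    hat Γ (cond a b) = {x | ∀ y, canR (hat Γ a) x y → y ∈ hat Γ b} := by
  ext x
  refine ⟨fun h y hy => hy a b rfl h, fun h => ?_⟩
  by_contra hc
  obtain ⟨y, h1, h2⟩ := (x.isTh.condTh a).exists_point (a := b) hc
  exact h2 (h y ((canR_hat a x y).2 h1))

theorem clopUp_eq_hat {A : Set (CanX Γ)} (hA : IsClopen A) (hu : IsUpset cle A) :
    ∃ a, A = hat Γ a := by
  have step : ∀ x ∈ A, ∃ a, x ∈ hat Γ a ∧ hat Γ a ⊆ A := by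
    intro x hx
    have : ∃ a, x ∈ hat Γ a ∧ Disjoint Aᶜ (hat Γ a) := by
      refine hA.compl.isClosed.isCompact.induction_on
        (p := fun s => ∃ a, x ∈ hat Γ a ∧ Disjoint s (hat Γ a)) ?_ ?_ ?_ ?_
      · exact ⟨cTop, mem_top x, Set.empty_disjoint _⟩
      · rintro s t hst ⟨a, h1, h2⟩
        exact ⟨a, h1, h2.mono_left hst⟩
      · rintro s t ⟨a, h1, h2⟩ ⟨b, h3, h4⟩
        refine ⟨and a b, ?_, ?_⟩
        · rw [hat_and]; exact ⟨h1, h3⟩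
        · rw [hat_and]
          exact Set.disjoint_union_left.2 ⟨h2.mono_right Set.inter_subset_left,
            h4.mono_right Set.inter_subset_right⟩
      · intro y hy
        have : ¬ cle x y := fun h => hy (hu h hx)
        obtain ⟨a, ha, hb⟩ := Set.not_subset.1 this
        exact ⟨(hat Γ a)ᶜ, mem_nhdsWithin_of_mem_nhds
          ((hat_clopen a).compl.isOpen.mem_nhds hb), a, ha, disjoint_compl_left⟩
    obtain ⟨a, h1, h2⟩ := this
    exact ⟨a, h1, Set.disjoint_compl_left_iff_subset.1 h2⟩
  have : ∃ a, A ⊆ hat Γ a ∧ hat Γ a ⊆ A := by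
    refine hA.isClosed.isCompact.induction_on
      (p := fun s => ∃ a, s ⊆ hat Γ a ∧ hat Γ a ⊆ A) ?_ ?_ ?_ ?_
    · exact ⟨bot, Set.empty_subset _, by rw [hat_bot]; exact Set.empty_subset _⟩
    · rintro s t hst ⟨a, h1, h2⟩
      exact ⟨a, hst.trans h1, h2⟩
    · rintro s t ⟨a, h1, h2⟩ ⟨b, h3, h4⟩
      refine ⟨or a b, ?_, ?_⟩
      · rw [hat_or]; exact Set.union_subset_union h1 h3
      · rw [hat_or]; exact Set.union_subset h2 h4
    · intro x hx
      obtain ⟨a, h1, h2⟩ := step x hx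
      exact ⟨hat Γ a, mem_nhdsWithin_of_mem_nhds ((hat_clopen a).isOpen.mem_nhds h1), a,
        subset_rfl, h2⟩
  obtain ⟨a, h1, h2⟩ := this
  exact ⟨a, h1.antisymm h2⟩

theorem cle_antisymm {x y : CanX Γ} (h1 : cle x y) (h2 : cle y x) : x = y := by
  apply Subtype.ext
  funext a
  exact Bool.eq_iff_iff.2 ⟨fun h => h1 h, fun h => h2 h⟩

theorem down_basic (a b : CForm) :
    IsClopen {x : CanX Γ | ∃ y ∈ hat Γ a \ hat Γ b, cle x y} := by
  have := (hat_clopen (Γ := Γ) (imp a b)).compl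
  rw [hat_imp] at this
  convert this using 1
  ext x
  simp only [Set.mem_ofPred_eq, Set.mem_compl_iff, Set.mem_sdiff]
  push Not
  exact ⟨fun ⟨y, h1, h2⟩ => ⟨y, h2, h1.1, h1.2⟩, fun ⟨y, h2, h1, h3⟩ => ⟨y, ⟨h1, h3⟩, h2⟩⟩

theorem can_down_clopen {A : Set (CanX Γ)} (hA : IsClopen A) :
    IsClopen {x : CanX Γ | ∃ y ∈ A, cle x y} := by
  have step : ∀ x ∈ A, ∃ a b, x ∈ hat Γ a \ hat Γ b ∧ hat Γ a \ hat Γ b ⊆ A := by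
    intro x hx
    have : ∃ a b, x ∈ hat Γ a \ hat Γ b ∧ Disjoint Aᶜ (hat Γ a \ hat Γ b) := by
      refine hA.compl.isClosed.isCompact.induction_on
        (p := fun s => ∃ a b, x ∈ hat Γ a \ hat Γ b ∧ Disjoint s (hat Γ a \ hat Γ b))
        ?_ ?_ ?_ ?_
      · exact ⟨cTop, bot, ⟨mem_top x, x.prime.2.1⟩, Set.empty_disjoint _⟩
      · rintro s t hst ⟨a, b, h1, h2⟩
        exact ⟨a, b, h1, h2.mono_left hst⟩
      · rintro s t ⟨a, b, h1, h2⟩ ⟨c, d, h3, h4⟩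
        refine ⟨and a c, or b d, ?_, ?_⟩
        · rw [hat_and, hat_or]
          exact ⟨⟨h1.1, h3.1⟩, fun h => h.elim h1.2 h3.2⟩
        · rw [hat_and, hat_or]
          exact Set.disjoint_union_left.2
            ⟨h2.mono_right (Set.sdiff_subset_sdiff Set.inter_subset_left
                Set.subset_union_left),
              h4.mono_right (Set.sdiff_subset_sdiff Set.inter_subset_right
                Set.subset_union_right)⟩
      · intro y hy
        by_cases hxy : cle x y
        · have : ¬ cle y x := fun h => hy (cle_antisymm hxy h ▸ hx)
          obtain ⟨a, ha, hb⟩ := Set.not_subset.1 this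
          exact ⟨hat Γ a, mem_nhdsWithin_of_mem_nhds
            ((hat_clopen a).isOpen.mem_nhds ha), cTop, a, ⟨mem_top x, hb⟩,
            Set.disjoint_sdiff_right⟩
        · obtain ⟨a, ha, hb⟩ := Set.not_subset.1 hxy
          exact ⟨(hat Γ a)ᶜ, mem_nhdsWithin_of_mem_nhds
            ((hat_clopen a).compl.isOpen.mem_nhds hb), a, bot, ⟨ha, x.prime.2.1⟩,
            disjoint_compl_left.mono_right Set.sdiff_subset⟩
    obtain ⟨a, b, h1, h2⟩ := this
    exact ⟨a, b, h1, Set.disjoint_compl_left_iff_subset.1 h2⟩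
  have : ∃ B, A ⊆ B ∧ B ⊆ A ∧ IsClopen {x : CanX Γ | ∃ y ∈ B, cle x y} := by
    refine hA.isClosed.isCompact.induction_on
      (p := fun s => ∃ B, s ⊆ B ∧ B ⊆ A ∧ IsClopen {x : CanX Γ | ∃ y ∈ B, cle x y})
      ?_ ?_ ?_ ?_
    · exact ⟨∅, subset_rfl, Set.empty_subset _, by simpa using isClopen_empty⟩
    · rintro s t hst ⟨B, h1, h2⟩
      exact ⟨B, hst.trans h1, h2⟩
    · rintro s t ⟨B, h1, h2, h3⟩ ⟨C, h4, h5, h6⟩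
      refine ⟨B ∪ C, Set.union_subset_union h1 h4, Set.union_subset h2 h5, ?_⟩
      convert h3.union h6 using 1
      ext x
      simp only [Set.mem_ofPred_eq, Set.mem_union]
      constructor
      · rintro ⟨y, h | h, hy⟩
        · exact Or.inl ⟨y, h, hy⟩
        · exact Or.inr ⟨y, h, hy⟩
      · rintro (⟨y, h, hy⟩ | ⟨y, h, hy⟩)
        · exact ⟨y, Or.inl h, hy⟩
        · exact ⟨y, Or.inr h, hy⟩
    · intro x hx
      obtain ⟨a, b, h1, h2⟩ := step x hx
      exact ⟨hat Γ a \ hat Γ b, mem_nhdsWithin_of_mem_nhds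
        (((hat_clopen a).diff (hat_clopen b)).isOpen.mem_nhds h1), _,
        subset_rfl, h2, down_basic a b⟩
  obtain ⟨B, h1, h2, h3⟩ := this
  rwa [h1.antisymm h2]

/-- The canonical conditional Esakia space. -/
def canSpace (Γ : Set CForm) (hne : Nonempty (CanX Γ)) : CondEsakia where
  X := CanX Γ
  ne := hne
  le := cle
  le_refl x := subset_rfl
  le_trans x y z h1 h2 := Set.Subset.trans h1 h2
  le_antisymm x y h1 h2 := cle_antisymm h1 h2
  top := inferInstance
  compact := inferInstance
  sep x y h := by
    obtain ⟨a, ha, hb⟩ := Set.not_subset.1 h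
    exact ⟨hat Γ a, hat_clopen a, hat_up a, ha, hb⟩
  down_clopen A hA := can_down_clopen hA
  R := canR
  box_clopen A B hA hA' hB hB' := by
    obtain ⟨a, rfl⟩ := clopUp_eq_hat hA hA'
    obtain ⟨b, rfl⟩ := clopUp_eq_hat hB hB'
    rw [← hat_cond]
    exact hat_clopen _
  coh A _ _ x z := by
    constructor
    · rintro ⟨x', y', h1, h2, h3⟩ a b he hb
      exact h3 (h2 a b he (h1 hb))
    · intro h
      exact ⟨x, z, subset_rfl, h, subset_rfl⟩
  im_closed A _ _ x := by
    simp only [canR, Set.ofPred_forall]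
    exact isClosed_iInter fun a => isClosed_iInter fun b => isClosed_iInter fun _ =>
      isClosed_iInter fun _ => (hat_clopen b).isClosed

theorem canSpace_csat (V : ℕ → Set (CanX Γ)) (σ : ℕ → CForm) (hV : ∀ p, V p = hat Γ (σ p))
    (φ : CForm) : csat cle canR V φ = hat Γ (psubst σ φ) := by
  induction φ with
  | var p => exact hV p
  | bot => exact hat_bot.symm
  | and φ ψ h1 h2 => simp only [csat, psubst, h1, h2, hat_and]
  | or φ ψ h1 h2 => simp only [csat, psubst, h1, h2, hat_or]
  | imp φ ψ h1 h2 => simp only [csat, psubst, h1, h2, hat_imp]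
  | cond φ ψ h1 h2 => simp only [csat, psubst, h1, h2, hat_cond]

theorem psubst_var (φ : CForm) : psubst CForm.var φ = φ := by
  induction φ <;> simp_all [psubst]

end Theories

/-- `φ ∈ ICK ⊕ Γ` iff `φ` is valid on every conditional
Esakia space validating all formulas of `Γ`. -/
theorem esakia_completeness (Γ : Set CForm) (φ : CForm) :
    ICK Γ φ ↔ ∀ S : CondEsakia, (∀ γ ∈ Γ, S.valid γ) → S.valid φ := by
  constructor
  · intro h S hS
    exact S.sound hS h
  · intro h
    by_contra hφ
    obtain ⟨x, -, hx⟩ := (isTh_ICK Γ).exists_point (a := φ) hφ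
    have hv := h (canSpace Γ ⟨x⟩) (by
      intro γ hγ V hV y
      choose σ hσ using fun p => clopUp_eq_hat (Γ := Γ) (hV p).1 (hV p).2
      have hy : y ∈ hat Γ (psubst σ γ) := y.isTh.1 _ (ICK.subst σ (ICK.prem hγ))
      rw [← canSpace_csat V σ hσ γ] at hy
      exact hy)
    have h1 : x ∈ csat cle canR (fun p => hat Γ (CForm.var p)) φ :=
      hv (fun p => hat Γ (CForm.var p)) (fun p => ⟨hat_clopen _, hat_up _⟩) x
    rw [canSpace_csat _ CForm.var (fun _ => rfl) φ, psubst_var] at h1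
    exact hx h1
end

section
/- Let 𝔛 be a conditional Esakia space and let F be a fill-in of 𝔛. Then for every L_⊳-formula φ, if φ is not valid on 𝔛 then φ is not valid on F. -/
/-- Truth sets under clopen-upset valuations are clopen upsets, and agree on a
space and its fill-in. -/
theorem fillin_csat_aux (S : CondEsakia)
    (R' : Set S.X → S.X → S.X → Prop)
    (hfill : ∀ a : Set S.X, S.ClopUp a → R' a = S.R a)
    (V : ℕ → Set S.X) (hV : ∀ p, S.ClopUp (V p)) (φ : CForm) :
    S.ClopUp (csat S.le S.R V φ) ∧ csat S.le R' V φ = csat S.le S.R V φ := by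
  letI := S.top
  induction φ with
  | var p => exact ⟨hV p, rfl⟩
  | bot => exact ⟨⟨isClopen_empty, fun _ _ _ h => h⟩, rfl⟩
  | and φ ψ ih1 ih2 =>
    obtain ⟨⟨c1, u1⟩, e1⟩ := ih1
    obtain ⟨⟨c2, u2⟩, e2⟩ := ih2
    refine ⟨⟨c1.inter c2, fun x y hxy h => ⟨u1 hxy h.1, u2 hxy h.2⟩⟩, ?_⟩
    simp only [csat, e1, e2]
  | or φ ψ ih1 ih2 =>
    obtain ⟨⟨c1, u1⟩, e1⟩ := ih1
    obtain ⟨⟨c2, u2⟩, e2⟩ := ih2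
    refine ⟨⟨c1.union c2, fun x y hxy h => h.imp (u1 hxy) (u2 hxy)⟩, ?_⟩
    simp only [csat, e1, e2]
  | imp φ ψ ih1 ih2 =>
    obtain ⟨⟨c1, u1⟩, e1⟩ := ih1
    obtain ⟨⟨c2, u2⟩, e2⟩ := ih2
    refine ⟨⟨?_, fun x y hxy h z hyz => h z (S.le_trans hxy hyz)⟩, ?_⟩
    · have h := (S.down_clopen _ (c1.inter c2.compl)).compl
      convert h using 1
      ext x
      simp only [csat, Set.mem_setOf_eq, Set.mem_compl_iff, Set.mem_inter_iff]
      constructor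
      · rintro h ⟨y, ⟨hy1, hy2⟩, hxy⟩
        exact hy2 (h y hxy hy1)
      · intro h y hxy hy1
        by_contra hy2
        exact h ⟨y, ⟨hy1, hy2⟩, hxy⟩
    · simp only [csat, e1, e2]
  | cond φ ψ ih1 ih2 =>
    obtain ⟨⟨c1, u1⟩, e1⟩ := ih1
    obtain ⟨⟨c2, u2⟩, e2⟩ := ih2
    refine ⟨⟨S.box_clopen _ _ c1 u1 c2 u2, fun x y hxy h z hyz => ?_⟩, ?_⟩
    · exact h z ((S.coh _ c1 u1 x z).1 ⟨y, z, hxy, hyz, S.le_refl z⟩)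
    · simp only [csat, e1, e2, hfill _ ⟨c1, u1⟩]

/-- If `F` is a fill-in of the conditional Esakia space `S`
(a conditional Kripke frame on the same order whose relations agree with those
of `S` on all clopen upsets), then every formula not valid on `S` is not valid
on `F`. -/
theorem fillin_inherits_refutation (S : CondEsakia)
    (R' : Set S.X → S.X → S.X → Prop)
    (hcoh : ∀ a : Set S.X, IsUpset S.le a →
      ∀ ⦃x y z : S.X⦄, S.le x y → R' a y z → ∃ w, R' a x w ∧ S.le w z)
    (hfill : ∀ a : Set S.X, S.ClopUp a → R' a = S.R a)
    (φ : CForm) (h : ¬ S.valid φ) :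
    ¬ (∀ V : ℕ → Set S.X, (∀ p, IsUpset S.le (V p)) →
        ∀ x, x ∈ csat S.le R' V φ) := by
  intro hval
  apply h
  intro V hV x
  rw [← (fillin_csat_aux S R' hfill V hV φ).2]
  exact hval V (fun p => (hV p).2) x
end
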